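/- For every N-element point set P in [0,1)^d, the squared extreme L₂-discrepancy admits the Haar expansion L₂ᵉˣᵗʳ_N(P)² = ∑_{j ∈ ℕ₀^d} 2^{|j|} ∑_{m ∈ D_j} |⟨Δ_P([0,·)), h_{j,m}⟩|², i.e., it equals the sum of squared (normalized) Haar coefficients of the anchored local discrepancy function over all levels j with no coordinate equal to −1. -/

import Mathlib

open MeasureTheory Set
open scoped Classical

/-- The one-dimensional dyadic Haar function `h_{j,m}`: `+1` on the left half
of the dyadic interval `I_{j,m} = [m/2^j, (m+1)/2^j)`, `-1` on the right half,
`0` elsewhere. -/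
noncomputable def haar1 (j m : ℕ) (x : ℝ) : ℝ :=
  if x ∈ Set.Ico ((m : ℝ) / 2 ^ j) (((m : ℝ) + 1 / 2) / 2 ^ j) then 1
  else if x ∈ Set.Ico (((m : ℝ) + 1 / 2) / 2 ^ j) (((m : ℝ) + 1) / 2 ^ j) then -1
  else 0

/-- The dyadic interval `I_{j,m} = [m/2^j, (m+1)/2^j)`. -/
def dyadicI (j m : ℕ) : Set ℝ := Set.Ico ((m : ℝ) / 2 ^ j) (((m : ℝ) + 1) / 2 ^ j)

/-- The unit cube `[0,1)^d`. -/
def unitBox (d : ℕ) : Set (Fin d → ℝ) := Set.univ.pi fun _ => Set.Ico (0 : ℝ) 1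

/-- The tensor product Haar function `h_{j,m}` on `[0,1)^d`. -/
noncomputable def haarD {d : ℕ} (j m : Fin d → ℕ) (x : Fin d → ℝ) : ℝ :=
  ∏ i, haar1 (j i) (m i) (x i)

/-- The dyadic box `I_{j,m} ⊆ [0,1)^d`. -/
def dyadicBox {d : ℕ} (j m : Fin d → ℕ) : Set (Fin d → ℝ) :=
  Set.univ.pi fun i => dyadicI (j i) (m i)

/-- The Haar coefficient `⟨f, h_{j,m}⟩ = ∫_{[0,1)^d} f·h_{j,m}`. -/
noncomputable def haarCoef {d : ℕ} (f : (Fin d → ℝ) → ℝ) (j m : Fin d → ℕ) : ℝ :=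
  ∫ x in unitBox d, f x * haarD j m x

/-- The anchored local discrepancy `Δ_P([0,t))` of the point set `P`. -/
noncomputable def discAnch {d N : ℕ} (P : Fin N → Fin d → ℝ) (t : Fin d → ℝ) : ℝ :=
  ((Finset.univ.filter fun i => ∀ k, 0 ≤ P i k ∧ P i k < t k).card : ℝ) / N
    - ∏ k, t k

/-- The local discrepancy `Δ_P([a,b))` of the point set `P` on the box `[a,b)`. -/
noncomputable def discBoxFn {d N : ℕ} (P : Fin N → Fin d → ℝ) (a b : Fin d → ℝ) : ℝ :=
  ((Finset.univ.filter fun i => ∀ k, a k ≤ P i k ∧ P i k < b k).card : ℝ) / N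
    - ∏ k, (b k - a k)

/-- Squared extreme (unanchored) `L₂`-discrepancy. -/
noncomputable def L2extrSq {d N : ℕ} (P : Fin N → Fin d → ℝ) : ℝ :=
  ∫ x in unitBox d, ∫ y in unitBox d,
    (if x ≤ y then (discBoxFn P x y) ^ 2 else 0)

/-- The squared (product dyadic) BMO seminorm of `f`, via Haar coefficients. -/
noncomputable def bmoSq {d : ℕ} (f : (Fin d → ℝ) → ℝ) : ℝ :=
  ⨆ U : {U : Set (Fin d → ℝ) // MeasurableSet U ∧ U ⊆ unitBox d ∧ 0 < volume U},
    (volume U.1).toReal⁻¹ *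
      ∑' j : Fin d → ℕ, (2 : ℝ) ^ (∑ i, j i) *
        ∑ m ∈ Fintype.piFinset (fun i => Finset.range (2 ^ j i)),
          (if dyadicBox j m ⊆ U.1 then (haarCoef f j m) ^ 2 else 0)


/-- Integral of `g` over the dyadic interval `I_{J,m}`. -/
noncomputable def dyInt (g : ℝ → ℝ) (J m : ℕ) : ℝ :=
  ∫ x in ((m : ℝ) / 2 ^ J)..(((m + 1 : ℕ) : ℝ) / 2 ^ J), g x

/-- Level-`J` energy. -/
noncomputable def dyE (g : ℝ → ℝ) (J : ℕ) : ℝ :=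
  2 ^ J * ∑ m ∈ Finset.range (2 ^ J), dyInt g J m ^ 2

theorem mono_abs_le {g : ℝ → ℝ} (hg : Monotone g) {a b x : ℝ} (hx : x ∈ Icc a b) :
    |g x| ≤ |g a| + |g b| := by
  have h1 := hg hx.1
  have h2 := hg hx.2
  have := neg_abs_le (g a)
  have := le_abs_self (g b)
  have := abs_nonneg (g a)
  have := abs_nonneg (g b)
  rw [abs_le]; constructor <;> linarith

theorem mono_sq_ii {g : ℝ → ℝ} (hg : Monotone g) {a b : ℝ} (hab : a ≤ b) :
    IntervalIntegrable (fun x => g x ^ 2) volume a b := by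
  rw [intervalIntegrable_iff_integrableOn_Ioc_of_le hab]
  refine Measure.integrableOn_of_bounded (M := (|g a| + |g b|) ^ 2) (by simp)
    (hg.measurable.pow_const 2).aestronglyMeasurable ?_
  rw [ae_restrict_iff' measurableSet_Ioc]
  refine Filter.Eventually.of_forall fun x hx => ?_
  have := mono_abs_le hg (Ioc_subset_Icc_self hx)
  rw [Real.norm_eq_abs, abs_pow]
  gcongr

/-- Local variance bound. -/
theorem var_bound {g : ℝ → ℝ} (hg : Monotone g) {a b : ℝ} (hab : a < b) :
    0 ≤ (∫ x in a..b, g x ^ 2) - (b - a)⁻¹ * (∫ x in a..b, g x) ^ 2 ∧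
    (∫ x in a..b, g x ^ 2) - (b - a)⁻¹ * (∫ x in a..b, g x) ^ 2
      ≤ (b - a) * (g b - g a) ^ 2 := by
  have hi : IntervalIntegrable g volume a b := hg.intervalIntegrable
  have hi2 := mono_sq_ii hg hab.le
  have hpos : 0 < b - a := sub_pos.2 hab
  set A := ∫ x in a..b, g x with hA
  set c := (b - a)⁻¹ * A with hc
  have hl : g a * (b - a) ≤ A := by
    have := intervalIntegral.integral_mono_on hab.le (intervalIntegrable_const (c := g a)) hi
      (fun x hx => hg hx.1)
    simpa [mul_comm] using this
  have hu : A ≤ g b * (b - a) := by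
    have := intervalIntegral.integral_mono_on hab.le hi (intervalIntegrable_const (c := g b))
      (fun x hx => hg hx.2)
    simpa [mul_comm] using this
  have hcA : c * (b - a) = A := by rw [hc]; field_simp
  have hcl : g a ≤ c := by
    by_contra h; push Not at h; nlinarith
  have hcu : c ≤ g b := by
    by_contra h; push Not at h; nlinarith
  have hexp : (∫ x in a..b, (g x - c) ^ 2) = (∫ x in a..b, g x ^ 2) - (b - a)⁻¹ * A ^ 2 := by
    have : ∀ x, (g x - c) ^ 2 = (g x ^ 2 - (2 * c) * g x) + c ^ 2 := fun x => by ring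
    simp_rw [this]
    rw [intervalIntegral.integral_add (hi2.sub (hi.const_mul _)) intervalIntegrable_const,
      intervalIntegral.integral_sub hi2 (hi.const_mul _), intervalIntegral.integral_const_mul,
      intervalIntegral.integral_const, ← hA, hc]
    simp only [smul_eq_mul]
    field_simp
    ring
  have hint : IntervalIntegrable (fun x => (g x - c) ^ 2) volume a b := by
    have : Monotone (fun x => g x - c) := fun x y h => sub_le_sub_right (hg h) c
    exact mono_sq_ii this hab.le
  rw [← hexp]
  constructor
  · exact intervalIntegral.integral_nonneg hab.le fun x _ => sq_nonneg _
  · have := intervalIntegral.integral_mono_on hab.le hint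
      (intervalIntegrable_const (c := (g b - g a) ^ 2)) (fun x hx => by
        have h1 := hg hx.1
        have h2 := hg hx.2
        apply sq_le_sq'  <;> linarith)
    simpa using this

theorem dyE_bound {g : ℝ → ℝ} (hg : Monotone g) (J : ℕ) :
    0 ≤ (∫ x in (0:ℝ)..1, g x ^ 2) - dyE g J ∧
    (∫ x in (0:ℝ)..1, g x ^ 2) - dyE g J ≤ (g 1 - g 0) ^ 2 * (1 / 2) ^ J := by
  have hp : (0:ℝ) < 2 ^ J := by positivity
  have hlt : ∀ m : ℕ, (m : ℝ) / 2 ^ J < ((m + 1 : ℕ) : ℝ) / 2 ^ J := fun m => by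
    gcongr; push_cast; linarith
  have hlen : ∀ m : ℕ, ((m + 1 : ℕ) : ℝ) / 2 ^ J - (m : ℝ) / 2 ^ J = (2 ^ J)⁻¹ := fun m => by
    push_cast; field_simp; ring
  have hsum := intervalIntegral.sum_integral_adjacent_intervals (μ := volume)
    (f := fun x => g x ^ 2) (a := fun m : ℕ => (m : ℝ) / 2 ^ J) (n := 2 ^ J)
    (fun k _ => mono_sq_ii hg (hlt k).le)
  have h1 : (((2 ^ J : ℕ) : ℝ)) / 2 ^ J = 1 := by push_cast; field_simp
  simp only [h1, Nat.cast_zero, zero_div] at hsum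
  have hE : (∫ x in (0:ℝ)..1, g x ^ 2) - dyE g J = ∑ m ∈ Finset.range (2 ^ J),
      ((∫ x in ((m : ℝ) / 2 ^ J)..(((m + 1 : ℕ) : ℝ) / 2 ^ J), g x ^ 2)
        - 2 ^ J * dyInt g J m ^ 2) := by
    rw [Finset.sum_sub_distrib, hsum, dyE, Finset.mul_sum]
  rw [hE]
  have hv := fun m : ℕ => var_bound hg (hlt m)
  simp only [hlen, inv_inv] at hv
  constructor
  · exact Finset.sum_nonneg fun m _ => (hv m).1
  · have htel := Finset.sum_range_sub (fun m : ℕ => g ((m : ℝ) / 2 ^ J)) (2 ^ J)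
    simp only [h1, Nat.cast_zero, zero_div] at htel
    calc _ ≤ ∑ m ∈ Finset.range (2 ^ J), (2 ^ J)⁻¹ * ((g 1 - g 0) *
          (g (((m + 1 : ℕ) : ℝ) / 2 ^ J) - g ((m : ℝ) / 2 ^ J))) := by
          refine Finset.sum_le_sum fun m hm => (hv m).2.trans ?_
          have hm' : m + 1 ≤ 2 ^ J := Finset.mem_range.1 hm
          have hm2 : ((m + 1 : ℕ) : ℝ) ≤ 2 ^ J := by exact_mod_cast hm'
          have a1 : g 0 ≤ g ((m : ℝ) / 2 ^ J) := hg (by positivity)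
          have a2 : g (((m + 1 : ℕ) : ℝ) / 2 ^ J) ≤ g 1 := hg ((div_le_one hp).2 hm2)
          have a3 := hg (hlt m).le
          rw [sq]
          have := inv_pos.2 hp
          gcongr
      _ = _ := by
          rw [← Finset.mul_sum, ← Finset.mul_sum, htel, one_div, inv_pow]; ring

theorem dyE_tendsto {g : ℝ → ℝ} (hg : Monotone g) :
    Filter.Tendsto (dyE g) Filter.atTop (nhds (∫ x in (0:ℝ)..1, g x ^ 2)) := by
  have h0 : Filter.Tendsto (fun J : ℕ => (g 1 - g 0) ^ 2 * (1 / 2 : ℝ) ^ J) Filter.atTop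
      (nhds 0) := by
    have := (tendsto_pow_atTop_nhds_zero_of_lt_one (r := (1/2:ℝ)) (by norm_num)
      (by norm_num)).const_mul ((g 1 - g 0) ^ 2)
    simpa using this
  have h1 := squeeze_zero (fun J => (dyE_bound hg J).1) (fun J => (dyE_bound hg J).2) h0
  have h2 := h1.const_sub (∫ x in (0:ℝ)..1, g x ^ 2)
  simpa using h2

/-- One-dimensional Haar coefficient. -/
noncomputable def coef1 (g : ℝ → ℝ) (j m : ℕ) : ℝ :=
  ∫ x in Ico (0:ℝ) 1, g x * haar1 j m x

theorem coef1_eq {g : ℝ → ℝ} (hg : Monotone g) {j m : ℕ} (hm : m < 2 ^ j) :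
    coef1 g j m = dyInt g (j + 1) (2 * m) - dyInt g (j + 1) (2 * m + 1) := by
  have hp : (0:ℝ) < 2 ^ j := by positivity
  have e0 : ((2 * m : ℕ) : ℝ) / 2 ^ (j + 1) = (m : ℝ) / 2 ^ j := by
    push_cast; rw [pow_succ]; field_simp
  have e1 : ((2 * m + 1 : ℕ) : ℝ) / 2 ^ (j + 1) = ((m : ℝ) + 1 / 2) / 2 ^ j := by
    push_cast; rw [pow_succ]; field_simp
  have e2 : ((2 * m + 1 + 1 : ℕ) : ℝ) / 2 ^ (j + 1) = ((m : ℝ) + 1) / 2 ^ j := by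
    push_cast; rw [pow_succ]; field_simp; ring
  rw [dyInt, dyInt, e0, e1, e2]
  have hm2 : (m : ℝ) + 1 ≤ 2 ^ j := by exact_mod_cast hm
  have l0 : 0 ≤ (m : ℝ) / 2 ^ j := by positivity
  have l1 : (m : ℝ) / 2 ^ j ≤ ((m : ℝ) + 1 / 2) / 2 ^ j := by gcongr; linarith
  have l2 : ((m : ℝ) + 1 / 2) / 2 ^ j ≤ ((m : ℝ) + 1) / 2 ^ j := by gcongr; linarith
  have l3 : ((m : ℝ) + 1) / 2 ^ j ≤ 1 := (div_le_one hp).2 hm2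
  unfold coef1 haar1
  generalize (m : ℝ) / 2 ^ j = a at *
  generalize ((m : ℝ) + 1 / 2) / 2 ^ j = b at *
  generalize ((m : ℝ) + 1) / 2 ^ j = c at *
  have hfun : (fun x => g x * (if x ∈ Ico a b then (1:ℝ) else if x ∈ Ico b c then -1 else 0))
      = fun x => (Ico a b).indicator g x - (Ico b c).indicator g x := by
    funext x
    by_cases h1 : x ∈ Ico a b
    · have h2 : x ∉ Ico b c := fun h => absurd h1.2 (not_lt.2 h.1)
      simp [h1, h2]
    · by_cases h2 : x ∈ Ico b c
      · simp only [h1, h2, if_true, if_false, indicator_of_mem, indicator_of_notMem,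
          not_false_eq_true]; ring
      · simp only [h1, h2, if_false, indicator_of_notMem, not_false_eq_true]; ring
  rw [hfun]
  have hgi : IntegrableOn g (Ico 0 1) := by
    have := hg.locallyIntegrable (μ := volume)
    exact (this.integrableOn_isCompact isCompact_Icc).mono_set Ico_subset_Icc_self
  rw [integral_sub (hgi.integrable.indicator measurableSet_Ico)
    (hgi.integrable.indicator measurableSet_Ico),
    setIntegral_indicator measurableSet_Ico, setIntegral_indicator measurableSet_Ico,
    inter_eq_right.2 (Ico_subset_Ico l0 (l2.trans l3)),
    inter_eq_right.2 (Ico_subset_Ico (l0.trans l1) l3),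
    integral_Ico_eq_integral_Ioc, integral_Ico_eq_integral_Ioc,
    intervalIntegral.integral_of_le l1, intervalIntegral.integral_of_le l2]

theorem dyInt_split {g : ℝ → ℝ} (hg : Monotone g) (j m : ℕ) :
    dyInt g j m = dyInt g (j + 1) (2 * m) + dyInt g (j + 1) (2 * m + 1) := by
  have e0 : ((2 * m : ℕ) : ℝ) / 2 ^ (j + 1) = (m : ℝ) / 2 ^ j := by
    push_cast; rw [pow_succ]; field_simp
  have e2 : ((2 * m + 1 + 1 : ℕ) : ℝ) / 2 ^ (j + 1) = ((m + 1 : ℕ) : ℝ) / 2 ^ j := by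
    push_cast; rw [pow_succ]; field_simp; ring
  unfold dyInt
  rw [intervalIntegral.integral_add_adjacent_intervals hg.intervalIntegrable
    hg.intervalIntegrable, e0, e2]

theorem sum_range_two_mul (f : ℕ → ℝ) (n : ℕ) :
    ∑ k ∈ Finset.range (2 * n), f k = ∑ m ∈ Finset.range n, (f (2 * m) + f (2 * m + 1)) := by
  induction n with
  | zero => simp
  | succ n ih =>
    rw [show 2 * (n + 1) = 2 * n + 1 + 1 by ring, Finset.sum_range_succ, Finset.sum_range_succ, ih,
      Finset.sum_range_succ]; ring

theorem dyE_step {g : ℝ → ℝ} (hg : Monotone g) (j : ℕ) :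
    2 ^ j * ∑ m ∈ Finset.range (2 ^ j), coef1 g j m ^ 2 = dyE g (j + 1) - dyE g j := by
  unfold dyE
  rw [show 2 ^ (j + 1) = 2 * 2 ^ j by ring, sum_range_two_mul,
    show (2:ℝ) ^ (j + 1) = 2 * 2 ^ j by ring, mul_comm 2 ((2:ℝ) ^ j), mul_assoc, ← mul_sub,
    Finset.mul_sum _ _ (2:ℝ), ← Finset.sum_sub_distrib]
  congr 1
  refine Finset.sum_congr rfl fun m hm => ?_
  rw [coef1_eq hg (Finset.mem_range.1 hm), dyInt_split hg j m]
  ring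

theorem hasSum_quad {g : ℝ → ℝ} (hg : Monotone g) :
    HasSum (fun j : ℕ => 2 ^ j * ∑ m ∈ Finset.range (2 ^ j), coef1 g j m ^ 2)
      ((∫ x in (0:ℝ)..1, g x ^ 2) - (∫ x in (0:ℝ)..1, g x) ^ 2) := by
  rw [hasSum_iff_tendsto_nat_of_nonneg (fun j => by positivity)]
  have : ∀ n, ∑ j ∈ Finset.range n, (2:ℝ) ^ j * ∑ m ∈ Finset.range (2 ^ j), coef1 g j m ^ 2
      = dyE g n - (∫ x in (0:ℝ)..1, g x) ^ 2 := fun n => by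
    rw [Finset.sum_congr rfl fun j _ => dyE_step hg j, Finset.sum_range_sub]
    congr 1
    simp [dyE, dyInt]
  simp_rw [this]
  exact (dyE_tendsto hg).sub_const _

/-- Lebesgue measure on `[0,1)`. -/
noncomputable abbrev mu01 : Measure ℝ := volume.restrict (Ico (0:ℝ) 1)

theorem intg01 {F : ℝ → ℝ} (hF : Measurable F) {C : ℝ} (hC : ∀ x ∈ Ico (0:ℝ) 1, |F x| ≤ C) :
    Integrable F mu01 := by
  refine Measure.integrableOn_of_bounded (M := C) (by simp) hF.aestronglyMeasurable ?_
  rw [ae_restrict_iff' measurableSet_Ico]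
  exact Filter.Eventually.of_forall hC

theorem mono_bd {g : ℝ → ℝ} (hg : Monotone g) :
    ∃ C, 0 ≤ C ∧ ∀ x ∈ Ico (0:ℝ) 1, |g x| ≤ C :=
  ⟨|g 0| + |g 1|, by positivity, fun _ hx => mono_abs_le hg (Ico_subset_Icc_self hx)⟩

theorem mono_intg {g : ℝ → ℝ} (hg : Monotone g) : Integrable g mu01 := by
  obtain ⟨C, _, hC⟩ := mono_bd hg
  exact intg01 hg.measurable hC

theorem mono_mul_intg {g h : ℝ → ℝ} (hg : Monotone g) (hh : Monotone h) :
    Integrable (fun x => g x * h x) mu01 := by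
  obtain ⟨C, h0, hC⟩ := mono_bd hg
  obtain ⟨D, h1, hD⟩ := mono_bd hh
  refine intg01 (C := C * D) (hg.measurable.mul hh.measurable) fun x hx => ?_
  rw [abs_mul]
  exact mul_le_mul (hC x hx) (hD x hx) (abs_nonneg _) h0

theorem haar1_meas (j m : ℕ) : Measurable (haar1 j m) := by
  unfold haar1
  exact Measurable.ite measurableSet_Ico measurable_const
    (Measurable.ite measurableSet_Ico measurable_const measurable_const)

theorem haar1_abs (j m : ℕ) (x : ℝ) : |haar1 j m x| ≤ 1 := by
  unfold haar1; split_ifs <;> simp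

theorem mono_haar_intg {g : ℝ → ℝ} (hg : Monotone g) (j m : ℕ) :
    Integrable (fun x => g x * haar1 j m x) mu01 := by
  obtain ⟨C, h0, hC⟩ := mono_bd hg
  refine intg01 (C := C * 1) (hg.measurable.mul (haar1_meas j m)) fun x hx => ?_
  rw [abs_mul]
  exact mul_le_mul (hC x hx) (haar1_abs j m x) (abs_nonneg _) h0

theorem coef1_add {g h : ℝ → ℝ} (hg : Monotone g) (hh : Monotone h) (j m : ℕ) :
    coef1 (g + h) j m = coef1 g j m + coef1 h j m := by
  unfold coef1
  rw [← integral_add (mono_haar_intg hg j m) (mono_haar_intg hh j m)]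
  simp [add_mul]

/-- The bilinear level-`j` Haar form. -/
noncomputable def S1 (g h : ℝ → ℝ) (j : ℕ) : ℝ :=
  2 ^ j * ∑ m ∈ Finset.range (2 ^ j), coef1 g j m * coef1 h j m

/-- The covariance. -/
noncomputable def V1 (g h : ℝ → ℝ) : ℝ :=
  (∫ x, g x * h x ∂mu01) - (∫ x, g x ∂mu01) * ∫ x, h x ∂mu01

theorem ii01 (f : ℝ → ℝ) : ∫ x in (0:ℝ)..1, f x = ∫ x, f x ∂mu01 := by
  rw [intervalIntegral.integral_of_le zero_le_one, integral_Ico_eq_integral_Ioc]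

theorem hasSum_diag {g : ℝ → ℝ} (hg : Monotone g) : HasSum (S1 g g) (V1 g g) := by
  have := hasSum_quad hg
  rw [ii01, ii01] at this
  unfold S1 V1
  simp only [← sq]
  exact this

theorem hasSum_bilin {g h : ℝ → ℝ} (hg : Monotone g) (hh : Monotone h) :
    HasSum (S1 g h) (V1 g h) := by
  have H := (((hasSum_diag (hg.add hh)).sub (hasSum_diag hg)).sub (hasSum_diag hh)).div_const 2
  have e1 : (fun j => (S1 (g + h) (g + h) j - S1 g g j - S1 h h j) / 2) = S1 g h := by
    funext j
    unfold S1
    simp only [coef1_add hg hh, ← mul_sub, ← Finset.sum_sub_distrib]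
    rw [mul_div_assoc, Finset.sum_div]
    congr 1
    refine Finset.sum_congr rfl fun m _ => ?_
    ring
  have e2 : (V1 (g + h) (g + h) - V1 g g - V1 h h) / 2 = V1 g h := by
    unfold V1
    have a1 : ∫ x, (g + h) x ∂mu01 = (∫ x, g x ∂mu01) + ∫ x, h x ∂mu01 :=
      integral_add (mono_intg hg) (mono_intg hh)
    have a2 : ∫ x, (g + h) x * (g + h) x ∂mu01 = (∫ x, g x * g x ∂mu01)
        + 2 * (∫ x, g x * h x ∂mu01) + ∫ x, h x * h x ∂mu01 := by
      have i12 : Integrable (fun x => g x * g x + 2 * (g x * h x)) mu01 :=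
        (mono_mul_intg hg hg).add ((mono_mul_intg hg hh).const_mul 2)
      rw [← integral_const_mul, ← integral_add (mono_mul_intg hg hg)
        ((mono_mul_intg hg hh).const_mul 2), ← integral_add i12 (mono_mul_intg hh hh)]
      congr 1
      funext x
      simp only [Pi.add_apply]
      ring
    rw [a1, a2]
    ring
  rw [← e1, ← e2]
  exact H

/-- The one-dimensional kernel. -/
noncomputable def K1 (g h : ℝ → ℝ) (x y : ℝ) : ℝ :=
  if x ≤ y then (g y - g x) * (h y - h x) else 0

theorem F1_intg {g h : ℝ → ℝ} (hg : Monotone g) (hh : Monotone h) :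
    Integrable (fun z : ℝ × ℝ => (g z.2 - g z.1) * (h z.2 - h z.1)) (mu01.prod mu01) := by
  have a := (mono_mul_intg hg hh).comp_snd mu01
  have b := (mono_mul_intg hg hh).comp_fst mu01
  have c := (mono_intg hg).mul_prod (mono_intg hh)
  have d := (mono_intg hh).mul_prod (mono_intg hg)
  refine ((a.add b).sub (c.add d)).congr (Filter.Eventually.of_forall fun z => ?_)
  simp
  ring

theorem K1_intg {g h : ℝ → ℝ} (hg : Monotone g) (hh : Monotone h) :
    Integrable (fun z : ℝ × ℝ => K1 g h z.1 z.2) (mu01.prod mu01) := by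
  have hs : MeasurableSet {z : ℝ × ℝ | z.1 ≤ z.2} := measurableSet_le measurable_fst measurable_snd
  refine ((F1_intg hg hh).indicator hs).congr (Filter.Eventually.of_forall fun z => ?_)
  simp only [K1, indicator, mem_ofPred_eq]

theorem K1_slice {g h : ℝ → ℝ} (hg : Monotone g) (hh : Monotone h) (x : ℝ) :
    Integrable (fun y => K1 g h x y) mu01 := by
  have hx : Integrable (fun y => (g y - g x) * (h y - h x)) mu01 := mono_mul_intg
    (g := fun y => g y - g x) (h := fun y => h y - h x)
    (fun _ _ hab => sub_le_sub_right (hg hab) _) (fun _ _ hab => sub_le_sub_right (hh hab) _)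
  refine (hx.indicator (measurableSet_Ici (a := x))).congr
    (Filter.Eventually.of_forall fun z => ?_)
  simp only [K1, indicator, mem_Ici]

theorem K1_integral {g h : ℝ → ℝ} (hg : Monotone g) (hh : Monotone h) :
    ∫ x, ∫ y, K1 g h x y ∂mu01 ∂mu01 = V1 g h := by
  have hK := K1_intg hg hh
  have hsw : Integrable (fun z : ℝ × ℝ => K1 g h z.2 z.1) (mu01.prod mu01) := hK.swap
  have e1 : ∫ x, ∫ y, K1 g h x y ∂mu01 ∂mu01 = ∫ z, K1 g h z.1 z.2 ∂(mu01.prod mu01) :=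
    (integral_prod _ hK).symm
  have e2 : ∫ z, K1 g h z.2 z.1 ∂(mu01.prod mu01) = ∫ z, K1 g h z.1 z.2 ∂(mu01.prod mu01) :=
    integral_prod_swap (μ := mu01) (ν := mu01) (fun z : ℝ × ℝ => K1 g h z.1 z.2)
  have e3 : (∫ z, K1 g h z.1 z.2 ∂(mu01.prod mu01)) + ∫ z, K1 g h z.2 z.1 ∂(mu01.prod mu01)
      = ∫ z : ℝ × ℝ, (g z.2 - g z.1) * (h z.2 - h z.1) ∂(mu01.prod mu01) := by
    rw [← integral_add hK hsw]
    congr 1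
    funext z
    unfold K1
    rcases lt_trichotomy z.1 z.2 with hz | hz | hz
    · simp [hz.le, not_le.2 hz]
    · simp [hz]
    · simp only [hz.le, not_le.2 hz, if_true, if_false]; ring
  have hm : mu01.real univ = 1 := by simp [Measure.real]
  have e4 : ∫ z : ℝ × ℝ, (g z.2 - g z.1) * (h z.2 - h z.1) ∂(mu01.prod mu01) = 2 * V1 g h := by
    have a := (mono_mul_intg hg hh).comp_snd mu01
    have b := (mono_mul_intg hg hh).comp_fst mu01
    have c := (mono_intg hg).mul_prod (mono_intg hh)
    have d := (mono_intg hh).mul_prod (mono_intg hg)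
    have : (fun z : ℝ × ℝ => (g z.2 - g z.1) * (h z.2 - h z.1)) = fun z =>
        (g z.2 * h z.2 + g z.1 * h z.1) - (g z.1 * h z.2 + h z.1 * g z.2) := by
      funext z; ring
    have ab : Integrable (fun z : ℝ × ℝ => g z.2 * h z.2 + g z.1 * h z.1) (mu01.prod mu01) :=
      a.add b
    have cd : Integrable (fun z : ℝ × ℝ => g z.1 * h z.2 + h z.1 * g z.2) (mu01.prod mu01) :=
      c.add d
    rw [this, integral_sub ab cd, integral_add a b, integral_add c d,
      integral_prod_mul, integral_prod_mul, integral_fun_snd (fun x => g x * h x),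
      integral_fun_fst (fun x => g x * h x), hm]
    unfold V1
    simp only [one_smul]
    ring
  rw [e1]
  linarith

theorem hasSum_pi_prod {d : ℕ} (s : Fin d → ℕ → ℝ) (v : Fin d → ℝ)
    (h : ∀ k, HasSum (s k) (v k)) :
    HasSum (fun j : Fin d → ℕ => ∏ k, s k (j k)) (∏ k, v k) := by
  induction d with
  | zero =>
    have := hasSum_unique (fun j : Fin 0 → ℕ => ∏ k, s k (j k))
    simpa using this
  | succ d ih =>
    have ih' := ih (fun k => s k.succ) (fun k => v k.succ) (fun k => h k.succ)
    have hs := summable_mul_of_summable_norm (h 0).summable.norm ih'.summable.norm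
    have H := (h 0).mul ih' hs
    rw [Fin.prod_univ_succ]
    rw [← (Fin.consEquiv (fun _ => ℕ)).hasSum_iff]
    refine H.congr_fun ?_
    intro p
    simp [Fin.prod_univ_succ, Fin.consEquiv]

theorem unitBox_restrict (d : ℕ) :
    (volume : Measure (Fin d → ℝ)).restrict (unitBox d) = Measure.pi fun _ => mu01 := by
  rw [volume_pi, unitBox, Measure.restrict_pi_pi]

/-- Factors of the tensor expansion of the discrepancy function. -/
noncomputable def GF {d N : ℕ} (P : Fin N → Fin d → ℝ) : Option (Fin N) → Fin d → ℝ → ℝ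
  | none, _ => fun t => t
  | some i, k => fun t => if P i k < t then 1 else 0

/-- Weights of the tensor expansion. -/
noncomputable def cF (N : ℕ) : Option (Fin N) → ℝ
  | none => -1
  | some _ => 1 / N

theorem GF_mono {d N : ℕ} (P : Fin N → Fin d → ℝ) (α : Option (Fin N)) (k : Fin d) :
    Monotone (GF P α k) := by
  cases α with
  | none => exact monotone_id
  | some i =>
    intro x y hxy
    simp only [GF]
    split_ifs with h1 h2
    · exact le_rfl
    · exact absurd (h1.trans_le hxy) h2
    · exact zero_le_one
    · exact le_rfl

theorem discAnch_eq {d N : ℕ} (P : Fin N → Fin d → ℝ) (hP : ∀ i, P i ∈ unitBox d)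
    (t : Fin d → ℝ) : discAnch P t = ∑ α, cF N α * ∏ k, GF P α k (t k) := by
  rw [Fintype.sum_option]
  simp only [cF, GF, Finset.prod_ite_zero, ← Finset.mul_sum]
  have : ∀ i k, 0 ≤ P i k := fun i k => (hP i k (mem_univ _)).1
  simp [discAnch, this]
  ring

theorem discBox_eq {d N : ℕ} (P : Fin N → Fin d → ℝ)
    {x y : Fin d → ℝ} (hxy : x ≤ y) :
    discBoxFn P x y = ∑ α, cF N α * ∏ k, (GF P α k (y k) - GF P α k (x k)) := by
  rw [Fintype.sum_option]
  have : ∀ i k, GF P (some i) k (y k) - GF P (some i) k (x k)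
      = if x k ≤ P i k ∧ P i k < y k then 1 else 0 := fun i k => by
    have := hxy k
    simp only [GF]
    split_ifs with h1 h2 h3 h3 h4 h5 <;> grind
  simp only [this, Finset.prod_ite_zero]
  simp only [cF, GF, ← Finset.mul_sum]
  simp [discBoxFn]
  ring

theorem prod_K1 {d N : ℕ} (P : Fin N → Fin d → ℝ) (x y : Fin d → ℝ) :
    (if x ≤ y then (discBoxFn P x y) ^ 2 else 0) = ∑ α, ∑ β, (cF N α * cF N β) *
      ∏ k, K1 (GF P α k) (GF P β k) (x k) (y k) := by
  simp only [K1, Finset.prod_ite_zero, Finset.mem_univ, forall_true_left]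
  by_cases h : x ≤ y
  · have h' : ∀ k, x k ≤ y k := h
    simp only [h, h', if_true, implies_true]
    rw [discBox_eq P h, sq, Finset.sum_mul_sum]
    refine Finset.sum_congr rfl fun α _ => Finset.sum_congr rfl fun β _ => ?_
    rw [Finset.prod_mul_distrib]; ring
  · have h' : ¬ ∀ k, x k ≤ y k := h
    simp [h, h']

theorem L2_eq {d N : ℕ} (P : Fin N → Fin d → ℝ) :
    L2extrSq P = ∑ α, ∑ β, (cF N α * cF N β) * ∏ k, V1 (GF P α k) (GF P β k) := by
  unfold L2extrSq
  rw [unitBox_restrict]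
  simp only [prod_K1]
  have hin : ∀ x : Fin d → ℝ, ∫ y, (∑ α, ∑ β, (cF N α * cF N β) *
      ∏ k, K1 (GF P α k) (GF P β k) (x k) (y k)) ∂(Measure.pi fun _ => mu01)
      = ∑ α, ∑ β, (cF N α * cF N β) *
        ∏ k, ∫ y, K1 (GF P α k) (GF P β k) (x k) y ∂mu01 := by
    intro x
    have hi : ∀ α β, Integrable (fun y : Fin d → ℝ => (cF N α * cF N β) *
        ∏ k, K1 (GF P α k) (GF P β k) (x k) (y k)) (Measure.pi fun _ => mu01) := fun α β =>
      (Integrable.fintype_prod (f := fun k y => K1 (GF P α k) (GF P β k) (x k) y)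
        (fun k => K1_slice (GF_mono P α k) (GF_mono P β k) (x k))).const_mul _
    rw [integral_finsetSum _ fun α _ => integrable_finsetSum _ fun β _ => hi α β]
    refine Finset.sum_congr rfl fun α _ => ?_
    rw [integral_finsetSum _ fun β _ => hi α β]
    refine Finset.sum_congr rfl fun β _ => ?_
    rw [integral_const_mul, integral_fintype_prod_eq_prod
      (f := fun k y => K1 (GF P α k) (GF P β k) (x k) y)]
  simp only [hin]
  have hi : ∀ α β, Integrable (fun x : Fin d → ℝ => (cF N α * cF N β) *
      ∏ k, ∫ y, K1 (GF P α k) (GF P β k) (x k) y ∂mu01) (Measure.pi fun _ => mu01) := fun α β =>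
    (Integrable.fintype_prod (f := fun k x => ∫ y, K1 (GF P α k) (GF P β k) x y ∂mu01)
      (fun k => (K1_intg (GF_mono P α k) (GF_mono P β k)).integral_prod_left)).const_mul _
  rw [integral_finsetSum _ fun α _ => integrable_finsetSum _ fun β _ => hi α β]
  refine Finset.sum_congr rfl fun α _ => ?_
  rw [integral_finsetSum _ fun β _ => hi α β]
  refine Finset.sum_congr rfl fun β _ => ?_
  rw [integral_const_mul, integral_fintype_prod_eq_prod
    (f := fun k x => ∫ y, K1 (GF P α k) (GF P β k) x y ∂mu01)]
  simp only [K1_integral (GF_mono P α _) (GF_mono P β _)]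

theorem haarCoef_eq {d N : ℕ} (P : Fin N → Fin d → ℝ) (hP : ∀ i, P i ∈ unitBox d)
    (j m : Fin d → ℕ) :
    haarCoef (discAnch P) j m = ∑ α, cF N α * ∏ k, coef1 (GF P α k) (j k) (m k) := by
  unfold haarCoef
  rw [unitBox_restrict]
  have : ∀ x, discAnch P x * haarD j m x
      = ∑ α, cF N α * ∏ k, (GF P α k (x k) * haar1 (j k) (m k) (x k)) := fun x => by
    rw [discAnch_eq P hP, haarD, Finset.sum_mul]
    refine Finset.sum_congr rfl fun α _ => ?_
    rw [Finset.prod_mul_distrib]; ring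
  simp only [this]
  rw [integral_finsetSum _ fun α _ => (Integrable.fintype_prod
    (f := fun k x => GF P α k x * haar1 (j k) (m k) x)
    (fun k => mono_haar_intg (GF_mono P α k) (j k) (m k))).const_mul _]
  refine Finset.sum_congr rfl fun α _ => ?_
  rw [integral_const_mul, integral_fintype_prod_eq_prod
    (f := fun k x => GF P α k x * haar1 (j k) (m k) x)]
  rfl

theorem level_eq {d N : ℕ} (P : Fin N → Fin d → ℝ) (hP : ∀ i, P i ∈ unitBox d)
    (j : Fin d → ℕ) :
    (2 : ℝ) ^ (∑ i, j i) * ∑ m ∈ Fintype.piFinset (fun i => Finset.range (2 ^ j i)),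
            (haarCoef (discAnch P) j m) ^ 2
      = ∑ α, ∑ β, (cF N α * cF N β) * ∏ k, S1 (GF P α k) (GF P β k) (j k) := by
  have h1 : ∀ m, (haarCoef (discAnch P) j m) ^ 2 = ∑ α, ∑ β, (cF N α * cF N β) *
      ∏ k, (coef1 (GF P α k) (j k) (m k) * coef1 (GF P β k) (j k) (m k)) := fun m => by
    rw [haarCoef_eq P hP, sq, Finset.sum_mul_sum]
    refine Finset.sum_congr rfl fun α _ => Finset.sum_congr rfl fun β _ => ?_
    rw [Finset.prod_mul_distrib]; ring
  simp only [h1]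
  rw [Finset.sum_comm, Finset.mul_sum]
  refine Finset.sum_congr rfl fun α _ => ?_
  rw [Finset.sum_comm, Finset.mul_sum]
  refine Finset.sum_congr rfl fun β _ => ?_
  unfold S1
  rw [← Finset.mul_sum, Finset.prod_mul_distrib, Finset.prod_univ_sum, Finset.prod_pow_eq_pow_sum]
  ring

theorem haar_expansion_extreme_L2 (d N : ℕ) (hd : 1 ≤ d)
    (P : Fin N → Fin d → ℝ) (hP : ∀ i, P i ∈ unitBox d) :
    L2extrSq P
      = ∑' j : Fin d → ℕ, (2 : ℝ) ^ (∑ i, j i) *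
          ∑ m ∈ Fintype.piFinset (fun i => Finset.range (2 ^ j i)),
            (haarCoef (discAnch P) j m) ^ 2 := by
  simp only [level_eq P hP]
  rw [L2_eq]
  refine (HasSum.tsum_eq ?_).symm
  refine hasSum_sum fun α _ => hasSum_sum fun β _ => ?_
  exact (hasSum_pi_prod _ _ fun k =>
    hasSum_bilin (GF_mono P α k) (GF_mono P β k)).mul_left _
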